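/- A bounded sequence V : ℤ → ℝ is periodic if and only if it is both quasi-periodic and limit-periodic. -/

import Mathlib

/-!
A periodic sequence factors through `ZMod p`, which embeds in the circle `ℝ/ℤ`; Tietze's theorem
extends the resulting function from the finite image to the whole circle, so the sequence is
quasi-periodic (`isQuasiPeriodicSeq_of_isPeriodicSeq`). It is trivially limit-periodic.

For the converse, write `V n = f (ω₀ + n • α)`. The frequencies that can occur in `V` are the
values `m · α ∈ ℝ/ℤ` for `m ∈ ℤᵈ`. They form a finitely generated group, whose torsion
subgroup is therefore finite: a single `p ≥ 1` annihilates all rational frequencies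
(`exists_pos_forall_nsmul_eq_zero`). Put `D n = V (n + p) - V n`. All rational frequencies have
been removed from `D`, so for every `q ≥ 1` the averages of `D` along the progression `n + k q`
tend to `0`: for characters this is a geometric sum (`meanVanish_mFourier`), and it passes to
all continuous `f` by density of the trigonometric polynomials (`meanVanish_of_continuous`). On the
other hand, limit-periodicity provides, for each `ε`, some `q` such that `D` is constant up to
`4 ε` along each progression of step `q`. Hence `|D n| ≤ 4 ε` for all `ε`, that is, `D = 0`.
-/

/-- A sequence `V : ℤ → ℝ` is periodic if `V (n + p) = V n` for all `n`, for some
integer `p ≥ 1`. -/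
def IsPeriodicSeq (V : ℤ → ℝ) : Prop :=
  ∃ p : ℤ, 1 ≤ p ∧ ∀ n : ℤ, V (n + p) = V n

/-- A sequence `V : ℤ → ℝ` is limit-periodic if it is a uniform limit of periodic
sequences. -/
def IsLimitPeriodicSeq (V : ℤ → ℝ) : Prop :=
  ∃ W : ℕ → ℤ → ℝ,
    (∀ j, IsPeriodicSeq (W j)) ∧
    ∀ ε : ℝ, 0 < ε → ∃ J : ℕ, ∀ j ≥ J, ∀ n : ℤ, |V n - W j n| ≤ ε

/-- A sequence `V : ℤ → ℝ` is quasi-periodic if `V n = f (n • α + ω₀)` for a continuous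
`f : 𝕋^d → ℝ` and elements `α, ω₀` of a finite-dimensional torus `𝕋^d = (ℝ/ℤ)^d`. -/
def IsQuasiPeriodicSeq (V : ℤ → ℝ) : Prop :=
  ∃ (d : ℕ) (α ω₀ : Fin d → AddCircle (1 : ℝ))
    (f : (Fin d → AddCircle (1 : ℝ)) → ℝ),
    Continuous f ∧ ∀ n : ℤ, V n = f (fun i => ω₀ i + n • α i)

open Filter Topology UnitAddTorus

theorem isQuasiPeriodicSeq_of_isPeriodicSeq {V : ℤ → ℝ} (h : IsPeriodicSeq V) :
    IsQuasiPeriodicSeq V := by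
  obtain ⟨p, hp, hV⟩ := h
  lift p to ℕ using by omega
  have : NeZero p := ⟨by omega⟩
  have he : IsClosedEmbedding (ZMod.toAddCircle : ZMod p → UnitAddCircle) :=
    continuous_of_discreteTopology.isClosedEmbedding (ZMod.toAddCircle_injective p)
  obtain ⟨g, hg⟩ := ContinuousMap.exists_extension he
    ⟨fun z : ZMod p => V (z.val : ℤ), continuous_of_discreteTopology⟩
  refine ⟨1, fun _ => ZMod.toAddCircle (1 : ZMod p), 0, fun x => g (x 0), by fun_prop, fun n => ?_⟩
  have h1 := congrArg (fun F : C(ZMod p, ℝ) => F (n : ZMod p)) hg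
  simp only [ContinuousMap.comp_apply, ContinuousMap.coe_mk, ZMod.val_intCast] at h1
  have h2 : V (n % p) = V n := by
    have hper : Function.Periodic V (p : ℤ) := hV
    have := hper.int_mul (n / p) (n % p)
    rw [← this]
    congr 1
    simpa [mul_comm] using Int.emod_add_mul_ediv n p
  rw [← h2, ← h1]
  simp [← map_zsmul]

/-- A finitely generated abelian group has a finite torsion subgroup, so one positive integer
annihilates all its elements of finite order. -/
theorem exists_pos_forall_nsmul_eq_zero (G : Type*) [AddCommGroup G] [Module.Finite ℤ G] :
    ∃ p : ℕ, 1 ≤ p ∧ ∀ g : G, ∀ q : ℕ, 1 ≤ q → q • g = 0 → p • g = 0 := by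
  have : Finite (Submodule.torsion ℤ G) :=
    Module.finite_of_fg_torsion _ Submodule.torsion_isTorsion
  refine ⟨Nat.card (Submodule.torsion ℤ G), Nat.card_pos, fun g q hq hg => ?_⟩
  have hmem : g ∈ Submodule.torsion ℤ G := by
    rw [Submodule.mem_torsion_iff]
    refine ⟨⟨(q : ℤ), mem_nonZeroDivisors_of_ne_zero (by omega)⟩, ?_⟩
    simpa [Submonoid.smul_def] using hg
  have := card_nsmul_eq_zero' (x := (⟨g, hmem⟩ : Submodule.torsion ℤ G))
  simpa using congrArg Subtype.val this

section Mean

variable {d : ℕ}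

theorem mFourier_add_nsmul (m : Fin d → ℤ) (x α : UnitAddTorus (Fin d)) (k : ℕ) :
    mFourier m (x + k • α) = mFourier m x * mFourier m α ^ k := by
  simp only [mFourier, ContinuousMap.coe_mk, ← Finset.prod_pow, ← Finset.prod_mul_distrib]
  refine Finset.prod_congr rfl fun i _ => ?_
  simp [fourier_apply, smul_add, AddCircle.toCircle_add, smul_comm (m i) k, AddCircle.toCircle_nsmul]

theorem mFourier_eq_toCircle (m : Fin d → ℤ) (α : UnitAddTorus (Fin d)) :
    mFourier m α = AddCircle.toCircle (∑ i, m i • α i) := by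
  have h (s : Finset (Fin d)) : (AddCircle.toCircle (∑ i ∈ s, m i • α i) : ℂ) =
      ∏ i ∈ s, fourier (m i) (α i) := by
    induction s using Finset.induction_on with
    | empty => simp
    | insert a s ha ih =>
      rw [Finset.sum_insert ha, Finset.prod_insert ha, AddCircle.toCircle_add, Circle.coe_mul, ih,
        fourier_apply]
  simp [mFourier, h]

/-- All values `mFourier m α` that are roots of unity are `p`-th roots of unity for one `p`. -/
theorem exists_pos_forall_mFourier_pow_eq_one (α : UnitAddTorus (Fin d)) :
    ∃ p : ℕ, 1 ≤ p ∧ ∀ (m : Fin d → ℤ) (q : ℕ), 1 ≤ q →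
      mFourier m α ^ q = 1 → mFourier m α ^ p = 1 := by
  let φ : (Fin d → ℤ) →ₗ[ℤ] UnitAddCircle := Fintype.linearCombination ℤ (M := UnitAddCircle) α
  obtain ⟨p, hp, h⟩ := exists_pos_forall_nsmul_eq_zero (LinearMap.range φ)
  have key (m : Fin d → ℤ) (k : ℕ) :
      mFourier m α ^ k = 1 ↔ k • (⟨φ m, m, rfl⟩ : LinearMap.range φ) = 0 := by
    rw [mFourier_eq_toCircle, ← Circle.coe_pow, ← AddCircle.toCircle_nsmul, Circle.coe_eq_one,
      ← AddCircle.toCircle_zero, (AddCircle.injective_toCircle one_ne_zero).eq_iff,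
      Subtype.ext_iff]
    rfl
  exact ⟨p, hp, fun m q hq hm => (key m p).2 (h _ q hq ((key m q).1 hm))⟩

/-- The average over `k < N` of the increments `F (x + (k q + p) • α) - F (x + (k q) • α)`. -/
noncomputable def meanIncrement (α : UnitAddTorus (Fin d)) (p q : ℕ)
    (F : UnitAddTorus (Fin d) → ℂ) (x : UnitAddTorus (Fin d)) (N : ℕ) : ℂ :=
  (N : ℂ)⁻¹ * ∑ k ∈ Finset.range N, (F (x + (k * q + p) • α) - F (x + (k * q) • α))

/-- If `p` annihilates the frequency of a character whenever `q` does, the averaged increments of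
the character tend to zero: its increments vanish if `q` annihilates the frequency, and otherwise
their sums are bounded geometric sums. -/
theorem meanVanish_mFourier {α : UnitAddTorus (Fin d)} {p q : ℕ} (m : Fin d → ℤ)
    (hp : mFourier m α ^ q = 1 → mFourier m α ^ p = 1) (x : UnitAddTorus (Fin d)) :
    Tendsto (meanIncrement α p q (mFourier m) x) atTop (𝓝 0) := by
  set z := mFourier m α with hz
  have hz1 : ‖z‖ = 1 := by rw [hz, mFourier_eq_toCircle, Circle.norm_coe]
  have hsum (N : ℕ) : meanIncrement α p q (mFourier m) x N =
      (N : ℂ)⁻¹ * (mFourier m x * (z ^ p - 1) * ∑ k ∈ Finset.range N, (z ^ q) ^ k) := by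
    rw [meanIncrement]
    congr 1
    rw [Finset.mul_sum]
    refine Finset.sum_congr rfl fun k _ => ?_
    rw [mFourier_add_nsmul, mFourier_add_nsmul, ← hz, pow_add, mul_comm k q, pow_mul]
    ring
  by_cases hq : z ^ q = 1
  · have : meanIncrement α p q (mFourier m) x = fun _ => 0 := by
      funext N
      rw [hsum, hp hq]
      simp
    rw [this]
    exact tendsto_const_nhds
  · refine squeeze_zero_norm
      (a := fun N : ℕ => ‖mFourier m x * (z ^ p - 1)‖ * (2 / ‖z ^ q - 1‖) / N)
      (fun N => ?_) (tendsto_const_div_atTop_nhds_zero_nat _)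
    rw [hsum, geom_sum_eq hq, norm_mul, norm_mul, norm_inv, Complex.norm_natCast, norm_div,
      inv_mul_eq_div]
    gcongr
    calc ‖(z ^ q) ^ N - 1‖ ≤ ‖(z ^ q) ^ N‖ + ‖(1 : ℂ)‖ := norm_sub_le _ _
      _ = 2 := by simp [hz1]; norm_num

theorem norm_meanIncrement_sub_le (α : UnitAddTorus (Fin d)) (p q : ℕ)
    (F G : C(UnitAddTorus (Fin d), ℂ)) (x : UnitAddTorus (Fin d)) (N : ℕ) :
    ‖meanIncrement α p q F x N - meanIncrement α p q G x N‖ ≤ 2 * ‖F - G‖ := by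
  rw [meanIncrement, meanIncrement, ← mul_sub, ← Finset.sum_sub_distrib, norm_mul, norm_inv,
    Complex.norm_natCast]
  have hb (y : UnitAddTorus (Fin d)) : ‖F y - G y‖ ≤ ‖F - G‖ := (F - G).norm_coe_le_norm y
  have hs : ‖∑ k ∈ Finset.range N, ((F (x + (k * q + p) • α) - F (x + (k * q) • α)) -
      (G (x + (k * q + p) • α) - G (x + (k * q) • α)))‖ ≤ N * (2 * ‖F - G‖) := by
    refine (norm_sum_le_of_le (n := fun _ => 2 * ‖F - G‖) _ fun k _ => ?_).trans (by simp)
    rw [sub_sub_sub_comm]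
    refine (norm_sub_le _ _).trans ?_
    linarith [hb (x + (k * q + p) • α), hb (x + (k * q) • α)]
  rcases N.eq_zero_or_pos with rfl | hN
  · simp
  · rw [inv_mul_le_iff₀ (by positivity)]
    exact hs

/-- The statement of `meanVanish_mFourier` for all continuous functions: averaged increments depend
continuously on the function, uniformly in `N`, and trigonometric polynomials are dense. -/
theorem meanVanish_of_continuous {α : UnitAddTorus (Fin d)} {p q : ℕ}
    (hp : ∀ m : Fin d → ℤ, mFourier m α ^ q = 1 → mFourier m α ^ p = 1)
    (F : C(UnitAddTorus (Fin d), ℂ)) (x : UnitAddTorus (Fin d)) :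
    Tendsto (meanIncrement α p q F x) atTop (𝓝 0) := by
  have hspan : ∀ G ∈ Submodule.span ℂ (Set.range (mFourier (d := Fin d))),
      Tendsto (meanIncrement α p q G x) atTop (𝓝 0) := by
    intro G hG
    induction hG using Submodule.span_induction with
    | mem G hG =>
      obtain ⟨m, rfl⟩ := hG
      exact meanVanish_mFourier m (hp m) x
    | zero =>
      have : meanIncrement α p q (0 : C(UnitAddTorus (Fin d), ℂ)) x = fun _ => 0 := by
        funext N
        simp [meanIncrement]
      rw [this]
      exact tendsto_const_nhds
    | add G H _ _ hG hH =>
      convert hG.add hH using 1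
      · funext N
        simp only [meanIncrement, ← mul_add, ← Finset.sum_add_distrib, ContinuousMap.add_apply]
        congr 1
        exact Finset.sum_congr rfl fun k _ => by ring
      · simp
    | smul c G _ hG =>
      convert hG.const_mul c using 1
      · funext N
        simp only [meanIncrement, ContinuousMap.smul_apply, smul_eq_mul, ← mul_sub,
          ← Finset.mul_sum]
        ring
      · simp
  have hF : F ∈ closure (Submodule.span ℂ (Set.range (mFourier (d := Fin d))) : Set _) := by
    rw [← Submodule.topologicalClosure_coe, span_mFourier_closure_eq_top]
    trivial
  rw [Metric.tendsto_atTop]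
  intro ε hε
  obtain ⟨G, hG, hFG⟩ := Metric.mem_closure_iff.1 hF (ε / 4) (by positivity)
  obtain ⟨N₀, hN₀⟩ := Metric.tendsto_atTop.1 (hspan G hG) (ε / 2) (by positivity)
  refine ⟨N₀, fun N hN => ?_⟩
  have h1 := hN₀ N hN
  have h2 := norm_meanIncrement_sub_le α p q F G x N
  rw [dist_eq_norm] at hFG
  rw [dist_zero_right] at h1 ⊢
  have h3 := norm_le_norm_sub_add (meanIncrement α p q F x N) (meanIncrement α p q G x N)
  linarith

end Mean

/-- A limit-periodic sequence is constant up to `2 ε` along the progressions of some step `q`. -/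
theorem IsLimitPeriodicSeq.exists_abs_sub_le {V : ℤ → ℝ} (h : IsLimitPeriodicSeq V) {ε : ℝ}
    (hε : 0 < ε) : ∃ q : ℕ, 1 ≤ q ∧ ∀ (n : ℤ) (k : ℕ), |V (n + k * q) - V n| ≤ 2 * ε := by
  obtain ⟨W, hW, hVW⟩ := h
  obtain ⟨J, hJ⟩ := hVW ε hε
  obtain ⟨q, hq, hper⟩ := hW J
  lift q to ℕ using by omega
  refine ⟨q, by omega, fun n k => ?_⟩
  have hper' : Function.Periodic (W J) (q : ℤ) := hper
  have h0 : W J (n + k * q) = W J n := hper'.int_mul k n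
  have h1 := abs_le.1 (hJ J le_rfl (n + k * q))
  have h2 := abs_le.1 (hJ J le_rfl n)
  rw [h0] at h1
  rw [abs_le]
  constructor <;> linarith

theorem isPeriodicSeq_of_isQuasiPeriodicSeq_of_isLimitPeriodicSeq {V : ℤ → ℝ}
    (hQ : IsQuasiPeriodicSeq V) (hL : IsLimitPeriodicSeq V) : IsPeriodicSeq V := by
  obtain ⟨d, α, ω₀, f, hf, hVf⟩ := hQ
  obtain ⟨p, hp1, hp⟩ := exists_pos_forall_mFourier_pow_eq_one α
  refine ⟨p, by omega, fun n => sub_eq_zero.1 (abs_eq_zero.1 (le_antisymm ?_ (abs_nonneg _)))⟩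
  refine le_of_forall_pos_le_add fun ε hε => ?_
  obtain ⟨q, hq1, hq⟩ := hL.exists_abs_sub_le (ε := ε / 4) (by positivity)
  let F : C(UnitAddTorus (Fin d), ℂ) := ⟨fun x => (f x : ℂ), by fun_prop⟩
  have hlim := meanVanish_of_continuous (fun m => hp m q hq1) F (ω₀ + n • α)
  have hF (k : ℕ) : F (ω₀ + n • α + k • α) = (V (n + k) : ℂ) := by
    rw [hVf]
    simp only [F, ContinuousMap.coe_mk]
    congr 2
    funext i
    simp [add_smul, add_assoc]
  set D : ℂ := ((V (n + p) - V n : ℝ) : ℂ) with hD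
  -- the averaged increments stay within `ε` of `V (n + p) - V n`, while they tend to `0`
  have hclose : ∀ᶠ N in atTop, ‖meanIncrement α p q F (ω₀ + n • α) N - D‖ ≤ ε := by
    filter_upwards [eventually_ge_atTop 1] with N hN
    have hN' : (N : ℂ) ≠ 0 := by exact_mod_cast (by omega : N ≠ 0)
    have heq : meanIncrement α p q F (ω₀ + n • α) N - D = (N : ℂ)⁻¹ *
        ∑ k ∈ Finset.range N, (((V (n + p + k * q) - V (n + p)) - (V (n + k * q) - V n) : ℝ) : ℂ) := by
      have hDs : D = (N : ℂ)⁻¹ * ∑ k ∈ Finset.range N, D := by simp [hN']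
      rw [hDs, meanIncrement, ← mul_sub, ← Finset.sum_sub_distrib]
      congr 1
      refine Finset.sum_congr rfl fun k _ => ?_
      rw [hF, hF, hD]
      push_cast
      rw [show n + ((k : ℤ) * q + p) = n + p + k * q by ring]
      ring
    rw [heq, norm_mul, norm_inv, Complex.norm_natCast, inv_mul_le_iff₀ (by positivity)]
    refine (norm_sum_le_of_le (n := fun _ => ε) _ fun k _ => ?_).trans (by simp)
    rw [Complex.norm_real, Real.norm_eq_abs]
    have h1 := hq (n + p) k
    have h2 := hq n k
    refine (abs_sub _ _).trans ?_
    linarith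
  have hle := le_of_tendsto (hlim.sub_const D).norm hclose
  simpa [hD, ← Complex.ofReal_sub, -Complex.ofReal_sub] using hle

/-- A bounded sequence `V : ℤ → ℝ` is periodic if and only if it is both quasi-periodic
and limit-periodic. -/
theorem stmt15 (V : ℤ → ℝ) (hV : ∃ C : ℝ, ∀ n : ℤ, |V n| ≤ C) :
    IsPeriodicSeq V ↔ (IsQuasiPeriodicSeq V ∧ IsLimitPeriodicSeq V) := by
  refine ⟨fun h => ⟨isQuasiPeriodicSeq_of_isPeriodicSeq h, fun _ => V, fun _ => h, fun ε hε =>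
    ⟨0, fun _ _ n => by simpa using hε.le⟩⟩, fun h =>
    isPeriodicSeq_of_isQuasiPeriodicSeq_of_isLimitPeriodicSeq h.1 h.2⟩
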